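/- Positivity preservation of the 1D first-order HLL scheme (Theorem 3.1): Work in one space dimension (d = 1, ξ = 1, so ⟨1, F(U)⟩ = F₁(U)). Let Δx_j > 0 (j ∈ ℤ), Δt_n > 0 (n ∈ ℕ), and let (Ū_j^n)_{j∈ℤ, n∈ℕ} ⊂ ℝ⁸ satisfy Ū_j^{n+1} = Ū_j^n − (Δt_n/Δx_j)·[F̂(Ū_j^n, Ū_{j+1}^n; 1) − F̂(Ū_{j−1}^n, Ū_j^n; 1)], where F̂ is the HLL flux with interface wave speeds σ^{n,l}_{j+1/2} < σ^{n,r}_{j+1/2} and σ^{n,+}_{j+1/2} = max{σ^{n,r}_{j+1/2}, 0}, σ^{n,−}_{j+1/2} = min{σ^{n,l}_{j+1/2}, 0}. Assume: (i) Ū_j^0 ∈ 𝒢 and the fifth component (the first magnetic component B₁) of Ū_j^0 equals a constant B_c for all j; (ii) for every n ∈ ℕ and j ∈ ℤ such that Ū_j^n, Ū_{j+1}^n ∈ 𝒢, one has σ^{n,r}_{j+1/2} ≥ α_r(Ū_{j+1}^n, Ū_j^n; 1) and σ^{n,l}_{j+1/2} ≤ α_l(Ū_j^n, Ū_{j+1}^n;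 1); (iii) the CFL condition (σ^{n,+}_{j−1/2} − σ^{n,−}_{j+1/2})·Δt_n/Δx_j < 1 holds for all j and n. Then for every n ∈ ℕ and every j ∈ ℤ, Ū_j^n ∈ 𝒢 and its fifth component equals B_c. -/

import Mathlib

noncomputable section

open Finset

/-- An MHD state `U = (ρ, m, B, E)` viewed as a vector in `ℝ⁸`. -/
abbrev MHDState := Fin 8 → ℝ

namespace MHD

/-- Build a state from density, momentum, magnetic field, total energy. -/
def mk (ρ : ℝ) (m B : Fin 3 → ℝ) (E : ℝ) : MHDState :=
  ![ρ, m 0, m 1, m 2, B 0, B 1, B 2, E]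

/-- Density component. -/
def dens (U : MHDState) : ℝ := U 0

/-- Momentum components. -/
def mom (U : MHDState) : Fin 3 → ℝ := ![U 1, U 2, U 3]

/-- Magnetic field components. -/
def magB (U : MHDState) : Fin 3 → ℝ := ![U 4, U 5, U 6]

/-- Total energy component. -/
def toten (U : MHDState) : ℝ := U 7

/-- Euclidean dot product on `ℝ³`. -/
def dot3 (a b : Fin 3 → ℝ) : ℝ := ∑ k, a k * b k

/-- Squared Euclidean norm on `ℝ³`. -/
def sq3 (a : Fin 3 → ℝ) : ℝ := dot3 a a

/-- Euclidean norm on `ℝ³`. -/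
def norm3 (a : Fin 3 → ℝ) : ℝ := Real.sqrt (sq3 a)

/-- Velocity `v = m / ρ`. -/
def vel (U : MHDState) : Fin 3 → ℝ := fun k => mom U k / dens U

/-- Internal energy `𝓔(U) = E − (|m|²/ρ + |B|²)/2`. -/
def intE (U : MHDState) : ℝ := toten U - (sq3 (mom U) / dens U + sq3 (magB U)) / 2

/-- Specific internal energy `e = 𝓔(U)/ρ`. -/
def specE (U : MHDState) : ℝ := intE U / dens U

/-- The admissible state set `𝒢`. -/
def Gset : Set MHDState := {U | 0 < dens U ∧ 0 < intE U}

/-- The set `𝒢_ρ` of states with positive density. -/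
def Grho : Set MHDState := {U | 0 < dens U}

/-- Euclidean dot product on `ℝ⁸`. -/
def dot8 (U V : MHDState) : ℝ := ∑ i, U i * V i

/-- The vector `n* = (|v*|²/2, −v*, −B*, 1)`. -/
def nstar (vs Bs : Fin 3 → ℝ) : MHDState :=
  mk (sq3 vs / 2) (fun k => -vs k) (fun k => -Bs k) 1

/-- The set `𝒢*`. -/
def GstarSet : Set MHDState :=
  {U | 0 < dens U ∧ ∀ vs Bs : Fin 3 → ℝ, 0 < dot8 U (nstar vs Bs) + sq3 Bs / 2}

/-- Equation of state assumption: for `ρ > 0`, `e > 0 ↔ p(ρ,e) > 0`. -/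
def IsEOS (pfun : ℝ → ℝ → ℝ) : Prop :=
  ∀ ρ e : ℝ, 0 < ρ → (0 < e ↔ 0 < pfun ρ e)

/-- Pressure of a state, via the equation of state. -/
def pres (pfun : ℝ → ℝ → ℝ) (U : MHDState) : ℝ := pfun (dens U) (specE U)

/-- Total pressure `p + |B|²/2`. -/
def ptot (pfun : ℝ → ℝ → ℝ) (U : MHDState) : ℝ := pres pfun U + sq3 (magB U) / 2

/-- The `i`-th flux `F_i(U)`. -/
def flux (pfun : ℝ → ℝ → ℝ) (i : Fin 3) (U : MHDState) : MHDState :=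
  mk (dens U * vel U i)
    (fun k => dens U * vel U i * vel U k - magB U i * magB U k
      + ptot pfun U * (if k = i then 1 else 0))
    (fun k => vel U i * magB U k - magB U i * vel U k)
    (vel U i * (toten U + ptot pfun U) - magB U i * dot3 (vel U) (magB U))

/-- Directional inner product `⟨ξ, w⟩ = Σ_{k<d} ξ_k w_k` for `ξ ∈ ℝ^d`, `w ∈ ℝ³`, `d ≤ 3`. -/
def dirDot {d : ℕ} (hd : d ≤ 3) (ξ : Fin d → ℝ) (w : Fin 3 → ℝ) : ℝ :=
  ∑ k, ξ k * w (Fin.castLE hd k)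

/-- Directional flux `⟨ξ, F(U)⟩ = Σ_{i<d} ξ_i F_i(U)`. -/
def dirFlux (pfun : ℝ → ℝ → ℝ) {d : ℕ} (hd : d ≤ 3) (ξ : Fin d → ℝ) (U : MHDState) :
    MHDState :=
  ∑ i, ξ i • flux pfun (Fin.castLE hd i) U

/-- `ξ` is a unit vector. -/
def unitVec {d : ℕ} (ξ : Fin d → ℝ) : Prop := (∑ k, (ξ k) ^ 2) = 1

/-- `𝒞_s(U) = p / (ρ √(2e))`. -/
def soundC (pfun : ℝ → ℝ → ℝ) (U : MHDState) : ℝ :=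
  pres pfun U / (dens U * Real.sqrt (2 * specE U))

/-- `𝒞(U; ξ)`. -/
def waveC (pfun : ℝ → ℝ → ℝ) {d : ℕ} (hd : d ≤ 3) (ξ : Fin d → ℝ) (U : MHDState) : ℝ :=
  Real.sqrt ((soundC pfun U ^ 2 + sq3 (magB U) / dens U
    + Real.sqrt ((soundC pfun U ^ 2 + sq3 (magB U) / dens U) ^ 2
      - 4 * soundC pfun U ^ 2 * dirDot hd ξ (magB U) ^ 2 / dens U)) / 2)

/-- Roe-type averaged velocity `v̄ = (√ρ v + √ρ̃ ṽ)/(√ρ + √ρ̃)`. -/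
def roeV (U Ut : MHDState) : Fin 3 → ℝ := fun k =>
  (Real.sqrt (dens U) * vel U k + Real.sqrt (dens Ut) * vel Ut k)
    / (Real.sqrt (dens U) + Real.sqrt (dens Ut))

/-- `α_r(U, Ũ; ξ)`. -/
def alphaR (pfun : ℝ → ℝ → ℝ) {d : ℕ} (hd : d ≤ 3) (ξ : Fin d → ℝ) (U Ut : MHDState) : ℝ :=
  max (dirDot hd ξ (vel U)) (dirDot hd ξ (roeV U Ut)) + waveC pfun hd ξ U
    + norm3 (magB U - magB Ut) / (Real.sqrt (dens U) + Real.sqrt (dens Ut))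

/-- `α_l(U, Ũ; ξ)`. -/
def alphaL (pfun : ℝ → ℝ → ℝ) {d : ℕ} (hd : d ≤ 3) (ξ : Fin d → ℝ) (U Ut : MHDState) : ℝ :=
  min (dirDot hd ξ (vel U)) (dirDot hd ξ (roeV U Ut)) - waveC pfun hd ξ U
    - norm3 (magB U - magB Ut) / (Real.sqrt (dens U) + Real.sqrt (dens Ut))

/-- `α_⋆(U, Ũ; ξ)`. -/
def alphaS (pfun : ℝ → ℝ → ℝ) {d : ℕ} (hd : d ≤ 3) (ξ : Fin d → ℝ) (U Ut : MHDState) : ℝ :=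
  max (|dirDot hd ξ (vel U)|) (|dirDot hd ξ (roeV U Ut)|) + waveC pfun hd ξ U
    + norm3 (magB U - magB Ut) / (Real.sqrt (dens U) + Real.sqrt (dens Ut))

/-- The vector `θ(U, v*, B*) = 2^{−1/2}(B − B*, √ρ(v − v*), √(2ρe)) ∈ ℝ⁷`. -/
def theta (U : MHDState) (vs Bs : Fin 3 → ℝ) : Fin 7 → ℝ :=
  ![(magB U 0 - Bs 0) / Real.sqrt 2,
    (magB U 1 - Bs 1) / Real.sqrt 2,
    (magB U 2 - Bs 2) / Real.sqrt 2,
    Real.sqrt (dens U) * (vel U 0 - vs 0) / Real.sqrt 2,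
    Real.sqrt (dens U) * (vel U 1 - vs 1) / Real.sqrt 2,
    Real.sqrt (dens U) * (vel U 2 - vs 2) / Real.sqrt 2,
    Real.sqrt (2 * intE U) / Real.sqrt 2]

/-- `|θ|²`. -/
def thetaSq (U : MHDState) (vs Bs : Fin 3 → ℝ) : ℝ := ∑ k, theta U vs Bs k ^ 2

/-- Godunov–Powell source vector `S(U) = (0, B, v, v·B)`. -/
def source (U : MHDState) : MHDState := mk 0 (magB U) (vel U) (dot3 (vel U) (magB U))

/-- HLL numerical flux with clamped wave speeds `σm ≤ 0 ≤ σp`. -/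
def hllFlux (pfun : ℝ → ℝ → ℝ) {d : ℕ} (hd : d ≤ 3) (ξ : Fin d → ℝ)
    (Um Up : MHDState) (σm σp : ℝ) : MHDState :=
  (σp - σm)⁻¹ • (σp • dirFlux pfun hd ξ Um - σm • dirFlux pfun hd ξ Up
    + (σm * σp) • (Up - Um))

/-- HLL intermediate state `H(U⁻, U⁺; ξ)`. -/
def hllMid (pfun : ℝ → ℝ → ℝ) {d : ℕ} (hd : d ≤ 3) (ξ : Fin d → ℝ)
    (Um Up : MHDState) (σm σp : ℝ) : MHDState :=
  (σp - σm)⁻¹ • (σp • Up - dirFlux pfun hd ξ Up - σm • Um + dirFlux pfun hd ξ Um)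

/-- The quantity `α̂_j` of Theorem 2.3. -/
def alphaHat (pfun : ℝ → ℝ → ℝ) {d : ℕ} (hd : d ≤ 3) {N : ℕ}
    (s : Fin N → ℝ) (ξ : Fin N → Fin d → ℝ) (U : Fin N → MHDState) (j : Fin N) : ℝ :=
  max (dirDot hd (ξ j) (vel (U j)))
      ((∑ i, s i)⁻¹ * ∑ i, s i * dirDot hd (fun k => ξ j k - ξ i k) (roeV (U j) (U i)))
  + waveC pfun hd (ξ j) (U j)
  + 2 * (∑ i, s i)⁻¹ * ∑ i, s i *
      (norm3 (magB (U j) - magB (U i)) / (Real.sqrt (dens (U j)) + Real.sqrt (dens (U i))))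

def d1le3 : (1 : ℕ) ≤ 3 := by omega
def d2le3 : (2 : ℕ) ≤ 3 := by omega

/-- In one dimension the direction `ξ = 1`. -/
def xi1 : Fin 1 → ℝ := fun _ => 1

/-!
Pairing a state with `n*` turns the nonlinear condition `𝓔(U) > 0` into a family of linear
inequalities: the energy relative to every velocity `v*` and every field `B*` is positive. The
new state of a cell is a convex combination of the HLL intermediate states at its two interfaces and
of the old state, whose weight is positive, so it is enough that the intermediate states satisfy the
same inequalities weakly.

For an intermediate state, equality of the normal fields cancels the only term of the paired flux
that is not controlled by relative energies. Of the rest, the kinetic and internal energies travel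
with `v`, the magnetic energy travels with `v*`, and the coupling terms are a bilinear form whose
largest singular value is `𝒞(U; ξ)`. Since `v*` is arbitrary it is compared with the averaged
velocity `v̄`; the weights `√ρ` in `v̄` let the error be absorbed by `|B − B̃| / (√ρ + √ρ̃)` times
the relative energy.
-/

section InnerProduct

open scoped InnerProductSpace

variable {F : Type*} [NormedAddCommGroup F] [InnerProductSpace ℝ F]

lemma quadForm_le_maxEigenvalue (a d k x y : ℝ) :
    a * x ^ 2 + 2 * k * x * y + d * y ^ 2
      ≤ (a + d + √((a - d) ^ 2 + 4 * k ^ 2)) / 2 * (x ^ 2 + y ^ 2) := by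
  have cauchySchwarz : (a - d) * (x ^ 2 - y ^ 2) + 2 * k * (2 * x * y)
      ≤ √((a - d) ^ 2 + 4 * k ^ 2) * (x ^ 2 + y ^ 2) := by
    refine le_of_abs_le (abs_le_of_sq_le_sq ?_ (by positivity))
    rw [mul_pow, Real.sq_sqrt (by positivity)]
    linarith [sq_nonneg ((a - d) * (2 * x * y) - 2 * k * (x ^ 2 - y ^ 2))]
  linarith

lemma sq_mul_add_inner_le (p z : ℝ) (g b : F) :
    (p * z + ⟪g, b⟫_ℝ) ^ 2 ≤ (p ^ 2 + ‖g‖ ^ 2) * (z ^ 2 + ‖b‖ ^ 2) := by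
  simpa [WithLp.prod_inner_apply, WithLp.prod_norm_sq_eq_of_L2, mul_comm, mul_pow] using
    pow_le_pow_left₀ (abs_nonneg _)
      (abs_real_inner_le_norm (WithLp.toLp 2 (p, g)) (WithLp.toLp 2 (z, b))) 2

lemma norm_sq_eq_inner_sq_add_norm_sub_sq {n : F} (hn : ‖n‖ = 1) (y : F) :
    ‖y‖ ^ 2 = ⟪n, y⟫_ℝ ^ 2 + ‖y - ⟪n, y⟫_ℝ • n‖ ^ 2 := by
  rw [norm_sub_sq_real, real_inner_smul_right, real_inner_comm n y, norm_smul, hn, mul_one,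
    Real.norm_eq_abs, sq_abs]
  ring

/-- The square of the fast magnetosonic speed in the unit direction `n`, for the sound speed `c`
and the Alfvén velocity `h = B / √ρ`. -/
def fastSpeedSq (c : ℝ) (n h : F) : ℝ :=
  (c ^ 2 + ‖h‖ ^ 2 + √((c ^ 2 + ‖h‖ ^ 2) ^ 2 - 4 * c ^ 2 * ⟪n, h⟫_ℝ ^ 2)) / 2

lemma fastSpeedSq_nonneg (c : ℝ) (n h : F) : 0 ≤ fastSpeedSq c n h := by
  unfold fastSpeedSq
  positivity

/-- Only the parts of `h` and `y` orthogonal to `n` survive in `⟪n, y⟫ • h - ⟪n, h⟫ • y`, so the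
triangle inequality leaves a binary quadratic form in `|⟪n, y⟫|` and the norm of the orthogonal part
of `y`. -/
lemma sq_mul_inner_add_norm_sq_le_fastSpeedSq (c : ℝ) {n : F} (hn : ‖n‖ = 1) (h y : F) :
    (c * ⟪n, y⟫_ℝ) ^ 2 + ‖⟪n, y⟫_ℝ • h - ⟪n, h⟫_ℝ • y‖ ^ 2 ≤ fastSpeedSq c n h * ‖y‖ ^ 2 := by
  set hₙ := ⟪n, h⟫_ℝ
  set yₙ := ⟪n, y⟫_ℝ
  set hₜ := h - hₙ • n
  set yₜ := y - yₙ • n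
  have norm_h : ‖h‖ ^ 2 = hₙ ^ 2 + ‖hₜ‖ ^ 2 := norm_sq_eq_inner_sq_add_norm_sub_sq hn h
  have norm_y : ‖y‖ ^ 2 = yₙ ^ 2 + ‖yₜ‖ ^ 2 := norm_sq_eq_inner_sq_add_norm_sub_sq hn y
  have tangential : yₙ • h - hₙ • y = yₙ • hₜ - hₙ • yₜ := by
    simp only [hₜ, yₜ]
    module
  have triangle : ‖yₙ • h - hₙ • y‖ ≤ |yₙ| * ‖hₜ‖ + |hₙ| * ‖yₜ‖ := by
    simpa only [tangential, norm_smul, Real.norm_eq_abs] using norm_sub_le (yₙ • hₜ) (hₙ • yₜ)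
  have speed : fastSpeedSq c n h = (c ^ 2 + ‖hₜ‖ ^ 2 + hₙ ^ 2
      + √((c ^ 2 + ‖hₜ‖ ^ 2 - hₙ ^ 2) ^ 2 + 4 * (|hₙ| * ‖hₜ‖) ^ 2)) / 2 := by
    simp only [fastSpeedSq, norm_h, mul_pow, sq_abs]
    congr 2
    · ring
    · congr 1
      ring
  calc (c * yₙ) ^ 2 + ‖yₙ • h - hₙ • y‖ ^ 2
    _ ≤ (c * yₙ) ^ 2 + (|yₙ| * ‖hₜ‖ + |hₙ| * ‖yₜ‖) ^ 2 := by gcongr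
    _ = (c ^ 2 + ‖hₜ‖ ^ 2) * |yₙ| ^ 2 + 2 * (|hₙ| * ‖hₜ‖) * |yₙ| * ‖yₜ‖ + hₙ ^ 2 * ‖yₜ‖ ^ 2 := by
      rw [← sq_abs hₙ, mul_pow, ← sq_abs yₙ]
      ring
    _ ≤ fastSpeedSq c n h * ‖y‖ ^ 2 := by
      rw [speed, norm_y, ← sq_abs yₙ]
      exact quadForm_le_maxEigenvalue _ _ _ _ _

lemma abs_inner_mul_sub_le_sqrt_fastSpeedSq (c z : ℝ) {n : F} (hn : ‖n‖ = 1) (h y b : F) :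
    |⟪n, y⟫_ℝ * (c * z + ⟪h, b⟫_ℝ) - ⟪n, h⟫_ℝ * ⟪y, b⟫_ℝ|
      ≤ √(fastSpeedSq c n h) * ((‖y‖ ^ 2 + z ^ 2 + ‖b‖ ^ 2) / 2) := by
  refine abs_le_of_sq_le_sq ?_ (by positivity)
  rw [mul_pow, Real.sq_sqrt (fastSpeedSq_nonneg c n h)]
  calc (⟪n, y⟫_ℝ * (c * z + ⟪h, b⟫_ℝ) - ⟪n, h⟫_ℝ * ⟪y, b⟫_ℝ) ^ 2
    _ = (c * ⟪n, y⟫_ℝ * z + ⟪⟪n, y⟫_ℝ • h - ⟪n, h⟫_ℝ • y, b⟫_ℝ) ^ 2 := by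
      rw [inner_sub_left, real_inner_smul_left, real_inner_smul_left]
      ring
    _ ≤ fastSpeedSq c n h * ‖y‖ ^ 2 * (z ^ 2 + ‖b‖ ^ 2) :=
      (sq_mul_add_inner_le _ _ _ _).trans <| mul_le_mul_of_nonneg_right
        (sq_mul_inner_add_norm_sq_le_fastSpeedSq c hn h y) (by positivity)
    _ = fastSpeedSq c n h * (‖y‖ ^ 2 * (z ^ 2 + ‖b‖ ^ 2)) := mul_assoc _ _ _
    _ ≤ fastSpeedSq c n h * ((‖y‖ ^ 2 + z ^ 2 + ‖b‖ ^ 2) / 2) ^ 2 := by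
      refine mul_le_mul_of_nonneg_left ?_ (fastSpeedSq_nonneg c n h)
      linarith [sq_nonneg (‖y‖ ^ 2 - (z ^ 2 + ‖b‖ ^ 2))]

lemma abs_add_mul_norm_sq_sub_le (u u' : ℝ) (b b' : F) :
    |(u + u') * (‖b‖ ^ 2 - ‖b'‖ ^ 2)|
      ≤ ‖b - b'‖ * (u ^ 2 + u' ^ 2 + ‖b‖ ^ 2 + ‖b'‖ ^ 2) := by
  have factor : ‖b‖ ^ 2 - ‖b'‖ ^ 2 = ⟪b - b', b + b'⟫_ℝ := by
    rw [inner_add_right, inner_sub_left, inner_sub_left, real_inner_comm b b',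
      real_inner_self_eq_norm_sq, real_inner_self_eq_norm_sq]
    ring
  have parallelogram := parallelogram_law_with_norm ℝ b b'
  calc |(u + u') * (‖b‖ ^ 2 - ‖b'‖ ^ 2)|
    _ ≤ |u + u'| * (‖b - b'‖ * ‖b + b'‖) := by
      rw [factor, abs_mul]
      gcongr
      exact abs_real_inner_le_norm _ _
    _ = ‖b - b'‖ * (|u + u'| * ‖b + b'‖) := by ring
    _ ≤ ‖b - b'‖ * (u ^ 2 + u' ^ 2 + ‖b‖ ^ 2 + ‖b'‖ ^ 2) := by
      refine mul_le_mul_of_nonneg_left ?_ (norm_nonneg _)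
      linarith [two_mul_le_add_sq |u + u'| ‖b + b'‖, sq_abs (u + u'), sq_nonneg (u - u'),
        mul_self_nonneg ‖b - b'‖]

end InnerProduct

section EuclideanSpace

open scoped InnerProductSpace

lemma dot3_eq_inner (a b : Fin 3 → ℝ) : dot3 a b = ⟪WithLp.toLp 2 a, WithLp.toLp 2 b⟫_ℝ := by
  simp [dot3, PiLp.inner_apply, mul_comm]

lemma sq3_eq_norm_sq (a : Fin 3 → ℝ) : sq3 a = ‖WithLp.toLp 2 a‖ ^ 2 := by
  rw [sq3, dot3_eq_inner, real_inner_self_eq_norm_sq]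

lemma sq3_nonneg (a : Fin 3 → ℝ) : 0 ≤ sq3 a := by
  rw [sq3_eq_norm_sq]
  positivity

lemma dot3_zero_left (a : Fin 3 → ℝ) : dot3 0 a = 0 := zero_dotProduct a

lemma norm3_eq_norm (a : Fin 3 → ℝ) : norm3 a = ‖WithLp.toLp 2 a‖ := by
  rw [norm3, sq3_eq_norm_sq, Real.sqrt_sq (norm_nonneg _)]

lemma norm3_sub_comm (a b : Fin 3 → ℝ) : norm3 (a - b) = norm3 (b - a) := by
  simp only [norm3_eq_norm, WithLp.toLp_sub, norm_sub_rev]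

end EuclideanSpace

section Direction

variable {d : ℕ} (hd : d ≤ 3)

/-- The direction `ξ ∈ ℝᵈ` as a vector of `ℝ³`, extended by zero. -/
def dirVec (ξ : Fin d → ℝ) : Fin 3 → ℝ := ∑ i, ξ i • Pi.single (Fin.castLE hd i) 1

lemma sum_smul_castLE {M : Type*} [AddCommGroup M] [Module ℝ M] (ξ : Fin d → ℝ) (f : Fin 3 → M) :
    ∑ i, ξ i • f (Fin.castLE hd i) = ∑ k, dirVec hd ξ k • f k := by
  simp only [dirVec, Finset.sum_apply, Pi.smul_apply, sum_smul]
  rw [sum_comm]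
  simp [Pi.single_apply]

lemma dirDot_eq_dot3 (ξ : Fin d → ℝ) (w : Fin 3 → ℝ) : dirDot hd ξ w = dot3 (dirVec hd ξ) w :=
  sum_smul_castLE hd ξ w

lemma norm_dirVec {ξ : Fin d → ℝ} (hξ : unitVec ξ) : ‖WithLp.toLp 2 (dirVec hd ξ)‖ = 1 := by
  have coord (k : Fin d) : dirVec hd ξ (Fin.castLE hd k) = ξ k := by
    simp [dirVec, Finset.sum_apply, Pi.single_apply]
  rw [← sq_eq_sq₀ (norm_nonneg _) zero_le_one, ← sq3_eq_norm_sq, sq3, ← dirDot_eq_dot3, one_pow,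
    ← hξ]
  simp only [dirDot, coord, sq]

lemma sq_dirDot_le_sq3 {ξ : Fin d → ℝ} (hξ : unitVec ξ) (w : Fin 3 → ℝ) :
    dirDot hd ξ w ^ 2 ≤ sq3 w := by
  rw [dirDot_eq_dot3, dot3_eq_inner, sq3_eq_norm_sq, ← sq_abs]
  simpa only [norm_dirVec hd hξ, one_mul] using pow_le_pow_left₀ (abs_nonneg _)
    (abs_real_inner_le_norm (WithLp.toLp 2 (dirVec hd ξ)) (WithLp.toLp 2 w)) 2

lemma dirFlux_eq_mk (pfun : ℝ → ℝ → ℝ) (ξ : Fin d → ℝ) (U : MHDState) :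
    dirFlux pfun hd ξ U = mk (dens U * dirDot hd ξ (vel U))
      ((dens U * dirDot hd ξ (vel U)) • vel U - dirDot hd ξ (magB U) • magB U
        + ptot pfun U • dirVec hd ξ)
      (dirDot hd ξ (vel U) • magB U - dirDot hd ξ (magB U) • vel U)
      (dirDot hd ξ (vel U) * (toten U + ptot pfun U)
        - dirDot hd ξ (magB U) * dot3 (vel U) (magB U)) := by
  rw [dirFlux, sum_smul_castLE hd ξ (flux pfun · U)]
  simp only [dirDot_eq_dot3, dot3, Fin.sum_univ_three]
  funext j
  fin_cases j <;>
    simp only [flux, mk, dot3, Fin.sum_univ_three, Fin.isValue, Fin.reduceFinMk, Fin.reduceEq,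
      Matrix.cons_val, Pi.add_apply, Pi.sub_apply, Pi.smul_apply, smul_eq_mul, if_true,
      if_false] <;>
    ring

end Direction

section RelativeEnergy

/-- The internal energy plus the kinetic energy of the velocity relative to `vs`. -/
def relKin (U : MHDState) (vs : Fin 3 → ℝ) : ℝ := dens U * sq3 (vel U - vs) / 2 + intE U

/-- The energy of the magnetic field relative to `Bs`. -/
def relMag (U : MHDState) (Bs : Fin 3 → ℝ) : ℝ := sq3 (magB U - Bs) / 2

/-- The total energy of `U` relative to the velocity `vs` and the field `Bs`; the paper's `|θ|²`. -/
def relEnergy (U : MHDState) (vs Bs : Fin 3 → ℝ) : ℝ := relKin U vs + relMag U Bs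

lemma relKin_pos {U : MHDState} (hU : U ∈ Gset) (vs : Fin 3 → ℝ) : 0 < relKin U vs :=
  add_pos_of_nonneg_of_pos (div_nonneg (mul_nonneg hU.1.le (sq3_nonneg _)) zero_le_two) hU.2

lemma relMag_nonneg (U : MHDState) (Bs : Fin 3 → ℝ) : 0 ≤ relMag U Bs :=
  div_nonneg (sq3_nonneg _) zero_le_two

lemma relEnergy_pos {U : MHDState} (hU : U ∈ Gset) (vs Bs : Fin 3 → ℝ) : 0 < relEnergy U vs Bs :=
  add_pos_of_pos_of_nonneg (relKin_pos hU vs) (relMag_nonneg U Bs)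

lemma dot8_mk_nstar (ρ E : ℝ) (m B vs Bs : Fin 3 → ℝ) :
    dot8 (mk ρ m B E) (nstar vs Bs) = ρ * sq3 vs / 2 - dot3 m vs - dot3 B Bs + E := by
  simp only [dot8, nstar, mk, Fin.sum_univ_eight, dot3, Fin.sum_univ_three, Matrix.cons_val]
  ring

lemma mom_eq_smul_vel {U : MHDState} (hU : 0 < dens U) : mom U = dens U • vel U := by
  funext k
  simp only [vel, Pi.smul_apply, smul_eq_mul, mul_div_cancel₀ _ hU.ne']

lemma toten_eq {U : MHDState} (hU : 0 < dens U) :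
    toten U = dens U * sq3 (vel U) / 2 + intE U + sq3 (magB U) / 2 := by
  rw [intE, mom_eq_smul_vel hU]
  simp only [sq3, dot3, Fin.sum_univ_three, Pi.smul_apply, smul_eq_mul]
  field [hU.ne']

lemma mk_dens_mom_magB_toten (U : MHDState) : mk (dens U) (mom U) (magB U) (toten U) = U := by
  funext i
  fin_cases i <;> rfl

lemma dot8_nstar {U : MHDState} (hU : 0 < dens U) (vs Bs : Fin 3 → ℝ) :
    dot8 U (nstar vs Bs) + sq3 Bs / 2 = relEnergy U vs Bs := by
  rw [← mk_dens_mom_magB_toten U, dot8_mk_nstar, mk_dens_mom_magB_toten, mom_eq_smul_vel hU,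
    toten_eq hU, relEnergy, relKin, relMag]
  simp only [sq3, dot3, Fin.sum_univ_three, Pi.smul_apply, Pi.sub_apply, smul_eq_mul]
  ring

theorem Gset_eq_GstarSet : Gset = GstarSet := by
  refine Set.Subset.antisymm (fun U hU => ⟨hU.1, fun vs Bs => ?_⟩) fun U hU => ⟨hU.1, ?_⟩
  · rw [dot8_nstar hU.1]
    exact relEnergy_pos hU vs Bs
  · have energy := hU.2 (vel U) (magB U)
    rwa [dot8_nstar hU.1, relEnergy, relKin, relMag, sub_self, sub_self, sq3, dot3_zero_left,
      mul_zero, zero_div, zero_add, add_zero] at energy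

/-- The states satisfying the inequalities that define `𝒢*` in their weak form; the HLL intermediate
states are only shown to lie here. -/
def GstarWeak : Set MHDState :=
  {U | 0 ≤ dens U ∧ ∀ vs Bs : Fin 3 → ℝ, 0 ≤ dot8 U (nstar vs Bs) + sq3 Bs / 2}

lemma dot8_add (U V n : MHDState) : dot8 (U + V) n = dot8 U n + dot8 V n := add_dotProduct U V n

lemma dot8_sub (U V n : MHDState) : dot8 (U - V) n = dot8 U n - dot8 V n := sub_dotProduct U V n

lemma dot8_smul (c : ℝ) (U n : MHDState) : dot8 (c • U) n = c * dot8 U n := smul_dotProduct c U n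

lemma smul_add_smul_add_smul_mem_Gset {U V W : MHDState} (hU : U ∈ Gset) (hV : V ∈ GstarWeak)
    (hW : W ∈ GstarWeak) {x y z : ℝ} (hx : 0 < x) (hy : 0 ≤ y) (hz : 0 ≤ z)
    (hsum : x + y + z = 1) : x • U + y • V + z • W ∈ Gset := by
  rw [Gset_eq_GstarSet] at hU ⊢
  refine ⟨?_, fun vs Bs => ?_⟩
  · change 0 < x * dens U + y * dens V + z * dens W
    linarith [mul_pos hx hU.1, mul_nonneg hy hV.1, mul_nonneg hz hW.1]
  · rw [dot8_add, dot8_add, dot8_smul, dot8_smul, dot8_smul]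
    linear_combination mul_pos hx (hU.2 vs Bs) + mul_nonneg hy (hV.2 vs Bs)
      + mul_nonneg hz (hW.2 vs Bs) + sq3 Bs / 2 * hsum

end RelativeEnergy

section WaveSpeeds

variable (pfun : ℝ → ℝ → ℝ) {d : ℕ} (hd : d ≤ 3) (ξ : Fin d → ℝ)

/-- The pressure and magnetic coupling terms in the flux of `relEnergy` in direction `ξ`: what is
left after transport of `relKin` with `v` and of `relMag` with `vs`. -/
def fluxCoupling (U : MHDState) (vs Bs : Fin 3 → ℝ) : ℝ :=
  pres pfun U * dirDot hd ξ (vel U - vs)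
    + dirDot hd ξ (vel U - vs) * dot3 (magB U) (magB U - Bs)
    - dirDot hd ξ (magB U) * dot3 (vel U - vs) (magB U - Bs)

/-- The flux of `relEnergy` in direction `ξ`, without the terms that cancel in the HLL
intermediate state when the normal fields agree. -/
def relFlux (U : MHDState) (vs Bs : Fin 3 → ℝ) : ℝ :=
  dirDot hd ξ (vel U) * relKin U vs + dirDot hd ξ vs * relMag U Bs
    + fluxCoupling pfun hd ξ U vs Bs

/-- The contribution `|B − B̃| / (√ρ + √ρ̃)` of the magnetic jump to `α_r` and `α_l`. -/
def jumpSpeed (U V : MHDState) : ℝ :=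
  norm3 (magB U - magB V) / (√(dens U) + √(dens V))

lemma jumpSpeed_nonneg (U V : MHDState) : 0 ≤ jumpSpeed U V :=
  div_nonneg (Real.sqrt_nonneg _) (by positivity)

lemma jumpSpeed_comm (U V : MHDState) : jumpSpeed U V = jumpSpeed V U := by
  rw [jumpSpeed, norm3_sub_comm, add_comm, jumpSpeed]

lemma roeV_comm (U V : MHDState) : roeV U V = roeV V U := by
  funext k
  simp only [roeV, add_comm]

lemma dot8_dirFlux_nstar {U : MHDState} (hU : 0 < dens U) (vs Bs : Fin 3 → ℝ) :
    dot8 (dirFlux pfun hd ξ U) (nstar vs Bs) = relFlux pfun hd ξ U vs Bs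
      - dirDot hd ξ vs * sq3 Bs / 2 + dirDot hd ξ (magB U) * dot3 vs Bs := by
  rw [dirFlux_eq_mk, dot8_mk_nstar, toten_eq hU, relFlux, fluxCoupling, relKin, relMag, ptot]
  simp only [dirDot_eq_dot3, sq3, dot3, Fin.sum_univ_three, Pi.add_apply, Pi.sub_apply,
    Pi.smul_apply, smul_eq_mul]
  ring

lemma waveC_eq_sqrt_fastSpeedSq {U : MHDState} (hU : 0 < dens U) :
    waveC pfun hd ξ U = √(fastSpeedSq (soundC pfun U) (WithLp.toLp 2 (dirVec hd ξ))
      ((√(dens U))⁻¹ • WithLp.toLp 2 (magB U))) := by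
  simp only [waveC, fastSpeedSq, norm_smul, real_inner_smul_right, ← dot3_eq_inner,
    ← dirDot_eq_dot3, mul_pow, ← sq3_eq_norm_sq, norm_inv, inv_pow, Real.norm_eq_abs, sq_abs,
    Real.sq_sqrt hU.le]
  congr 3 <;> ring_nf

lemma pres_eq_soundC_mul {U : MHDState} (hU : U ∈ Gset) :
    pres pfun U = soundC pfun U * (√(dens U) * √(2 * intE U)) := by
  obtain ⟨hρ, hE⟩ := hU
  have he : 0 < specE U := div_pos hE hρ
  have energy : intE U = dens U * specE U := (mul_div_cancel₀ _ hρ.ne').symm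
  have root : √(dens U) * √(2 * intE U) = dens U * √(2 * specE U) := by
    rw [energy, mul_left_comm, Real.sqrt_mul hρ.le, ← mul_assoc, Real.mul_self_sqrt hρ.le]
  rw [root, soundC, div_mul_cancel₀ _ (by positivity)]

lemma abs_fluxCoupling_le {ξ : Fin d → ℝ} (hξ : unitVec ξ) {U : MHDState} (hU : U ∈ Gset)
    (vs Bs : Fin 3 → ℝ) :
    |fluxCoupling pfun hd ξ U vs Bs| ≤ waveC pfun hd ξ U * relEnergy U vs Bs := by
  have hs : √(dens U) ≠ 0 := (Real.sqrt_pos.2 hU.1).ne'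
  convert abs_inner_mul_sub_le_sqrt_fastSpeedSq (soundC pfun U) (√(2 * intE U))
    (norm_dirVec hd hξ) ((√(dens U))⁻¹ • WithLp.toLp 2 (magB U))
    (√(dens U) • WithLp.toLp 2 (vel U - vs)) (WithLp.toLp 2 (magB U - Bs)) using 2
  · simp only [fluxCoupling, pres_eq_soundC_mul pfun hU, real_inner_smul_left,
      real_inner_smul_right, ← dot3_eq_inner, ← dirDot_eq_dot3]
    field
  · exact waveC_eq_sqrt_fastSpeedSq pfun hd ξ hU.1
  · rw [norm_smul, mul_pow, ← sq3_eq_norm_sq, ← sq3_eq_norm_sq, Real.norm_eq_abs, sq_abs,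
      Real.sq_sqrt hU.1.le, Real.sq_sqrt (mul_nonneg zero_le_two hU.2.le), relEnergy, relKin,
      relMag]
    ring

lemma dirDot_roeV_sub_dirDot {U V : MHDState} (hU : 0 < dens U) (vs : Fin 3 → ℝ) :
    dirDot hd ξ (roeV U V) - dirDot hd ξ vs = (√(dens U) * dirDot hd ξ (vel U - vs)
      + √(dens V) * dirDot hd ξ (vel V - vs)) / (√(dens U) + √(dens V)) := by
  have hs : √(dens U) + √(dens V) ≠ 0 :=
    (add_pos_of_pos_of_nonneg (Real.sqrt_pos.2 hU) (Real.sqrt_nonneg _)).ne'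
  simp only [dirDot_eq_dot3, dot3, Fin.sum_univ_three, roeV, Pi.sub_apply]
  field

lemma sq_sqrt_dens_mul_dirDot_le {ξ : Fin d → ℝ} (hξ : unitVec ξ) {U : MHDState} (hU : U ∈ Gset)
    (vs : Fin 3 → ℝ) : (√(dens U) * dirDot hd ξ (vel U - vs)) ^ 2 ≤ 2 * relKin U vs := by
  rw [mul_pow, Real.sq_sqrt hU.1.le, relKin]
  linarith [mul_le_mul_of_nonneg_left (sq_dirDot_le_sq3 hd hξ (vel U - vs)) hU.1.le, hU.2]

lemma abs_dirDot_roeV_sub_mul_relMag_sub_le {ξ : Fin d → ℝ} (hξ : unitVec ξ) {U V : MHDState}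
    (hU : U ∈ Gset) (hV : V ∈ Gset) (vs Bs : Fin 3 → ℝ) :
    |(dirDot hd ξ (roeV U V) - dirDot hd ξ vs) * (relMag U Bs - relMag V Bs)|
      ≤ jumpSpeed U V * (relEnergy U vs Bs + relEnergy V vs Bs) := by
  set u := √(dens U) * dirDot hd ξ (vel U - vs)
  set u' := √(dens V) * dirDot hd ξ (vel V - vs)
  have jump := abs_add_mul_norm_sq_sub_le u u' (WithLp.toLp 2 (magB U - Bs))
    (WithLp.toLp 2 (magB V - Bs))
  rw [← WithLp.toLp_sub, sub_sub_sub_cancel_right, ← sq3_eq_norm_sq, ← sq3_eq_norm_sq,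
    ← norm3_eq_norm] at jump
  calc |(dirDot hd ξ (roeV U V) - dirDot hd ξ vs) * (relMag U Bs - relMag V Bs)|
    _ = |(u + u') * (sq3 (magB U - Bs) - sq3 (magB V - Bs))|
          / (2 * (√(dens U) + √(dens V))) := by
      rw [dirDot_roeV_sub_dirDot hd ξ hU.1, relMag, relMag, ← sub_div, div_mul_div_comm, abs_div,
        mul_comm _ (2 : ℝ), abs_of_nonneg (a := 2 * _) (by positivity)]
    _ ≤ norm3 (magB U - magB V)
          * (2 * (relEnergy U vs Bs + relEnergy V vs Bs)) / (2 * (√(dens U) + √(dens V))) := by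
      refine div_le_div_of_nonneg_right (jump.trans ?_) (by positivity)
      refine mul_le_mul_of_nonneg_left ?_ (Real.sqrt_nonneg _)
      simp only [relEnergy, relMag]
      linarith [sq_sqrt_dens_mul_dirDot_le hd hξ hU vs, sq_sqrt_dens_mul_dirDot_le hd hξ hV vs]
    _ = jumpSpeed U V * (relEnergy U vs Bs + relEnergy V vs Bs) := by
      rw [mul_left_comm, mul_div_mul_left _ _ two_ne_zero, jumpSpeed, div_mul_eq_mul_div]

lemma dirDot_vel_le_alphaR (U V : MHDState) : dirDot hd ξ (vel U) ≤ alphaR pfun hd ξ U V :=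
  (le_max_left _ _).trans <| (le_add_of_nonneg_right (Real.sqrt_nonneg _)).trans <|
    le_add_of_nonneg_right (jumpSpeed_nonneg U V)

lemma alphaL_le_dirDot_vel (U V : MHDState) : alphaL pfun hd ξ U V ≤ dirDot hd ξ (vel U) :=
  (sub_le_self _ (jumpSpeed_nonneg U V)).trans <| (sub_le_self _ (Real.sqrt_nonneg _)).trans <|
    min_le_left _ _

lemma relFlux_le_alphaR_mul {ξ : Fin d → ℝ} (hξ : unitVec ξ) {U : MHDState} (hU : U ∈ Gset)
    (V : MHDState) (vs Bs : Fin 3 → ℝ) :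
    relFlux pfun hd ξ U vs Bs ≤ (alphaR pfun hd ξ U V - jumpSpeed U V) * relEnergy U vs Bs
      - (dirDot hd ξ (roeV U V) - dirDot hd ξ vs) * relMag U Bs := by
  have coupling := (abs_le.1 (abs_fluxCoupling_le pfun hd hξ hU vs Bs)).2
  have kin := mul_le_mul_of_nonneg_right
    (le_max_left (dirDot hd ξ (vel U)) (dirDot hd ξ (roeV U V))) (relKin_pos hU vs).le
  have mag := mul_le_mul_of_nonneg_right
    (le_max_right (dirDot hd ξ (vel U)) (dirDot hd ξ (roeV U V))) (relMag_nonneg U Bs)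
  simp only [relFlux, alphaR, jumpSpeed, relEnergy] at coupling ⊢
  linarith

lemma alphaL_mul_le_relFlux {ξ : Fin d → ℝ} (hξ : unitVec ξ) {U : MHDState} (hU : U ∈ Gset)
    (V : MHDState) (vs Bs : Fin 3 → ℝ) :
    (alphaL pfun hd ξ U V + jumpSpeed U V) * relEnergy U vs Bs
      - (dirDot hd ξ (roeV U V) - dirDot hd ξ vs) * relMag U Bs ≤ relFlux pfun hd ξ U vs Bs := by
  have coupling := (abs_le.1 (abs_fluxCoupling_le pfun hd hξ hU vs Bs)).1
  have kin := mul_le_mul_of_nonneg_right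
    (min_le_left (dirDot hd ξ (vel U)) (dirDot hd ξ (roeV U V))) (relKin_pos hU vs).le
  have mag := mul_le_mul_of_nonneg_right
    (min_le_right (dirDot hd ξ (vel U)) (dirDot hd ξ (roeV U V))) (relMag_nonneg U Bs)
  simp only [relFlux, alphaL, jumpSpeed, relEnergy] at coupling ⊢
  linarith

end WaveSpeeds

section HLL

variable (pfun : ℝ → ℝ → ℝ) {d : ℕ} (hd : d ≤ 3) {ξ : Fin d → ℝ}

variable (ξ) in
/-- The normal component `⟨ξ, B⟩` of the magnetic field, as a linear functional of the state. -/
def normalField : MHDState →ₗ[ℝ] ℝ where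
  toFun U := dirDot hd ξ (magB U)
  map_add' U V := by
    simp only [dirDot_eq_dot3, dot3, Fin.sum_univ_three, magB, Matrix.cons_val, Pi.add_apply]
    ring
  map_smul' c U := by
    simp only [dirDot_eq_dot3, dot3, Fin.sum_univ_three, magB, Matrix.cons_val, Pi.smul_apply,
      smul_eq_mul, RingHom.id_apply]
    ring

lemma normalField_apply (U : MHDState) : normalField hd ξ U = dirDot hd ξ (magB U) := rfl

lemma dens_hllMid (Um Up : MHDState) (a b : ℝ) :
    dens (hllMid pfun hd ξ Um Up a b) = (b - a)⁻¹ *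
      ((b - dirDot hd ξ (vel Up)) * dens Up + (dirDot hd ξ (vel Um) - a) * dens Um) := by
  simp only [hllMid, dirFlux_eq_mk, mk, dens, Pi.add_apply, Pi.sub_apply, Pi.smul_apply,
    smul_eq_mul, Matrix.cons_val]
  ring

lemma dot8_hllMid_nstar {Um Up : MHDState} (hm : 0 < dens Um) (hp : 0 < dens Up)
    (hB : normalField hd ξ Um = normalField hd ξ Up) {a b : ℝ} (hab : a < b)
    (vs Bs : Fin 3 → ℝ) :
    dot8 (hllMid pfun hd ξ Um Up a b) (nstar vs Bs) + sq3 Bs / 2 = (b - a)⁻¹ *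
      (b * relEnergy Up vs Bs - relFlux pfun hd ξ Up vs Bs
        + (relFlux pfun hd ξ Um vs Bs - a * relEnergy Um vs Bs)) := by
  have hba : b - a ≠ 0 := (sub_pos.2 hab).ne'
  simp only [← dot8_nstar hp, ← dot8_nstar hm, hllMid, dot8_smul, dot8_add, dot8_sub,
    dot8_dirFlux_nstar pfun hd ξ hp, dot8_dirFlux_nstar pfun hd ξ hm,
    ← normalField_apply, hB]
  field

theorem hllMid_mem_GstarWeak (hξ : unitVec ξ) {Um Up : MHDState} (hm : Um ∈ Gset)
    (hp : Up ∈ Gset) (hB : normalField hd ξ Um = normalField hd ξ Up) {a b : ℝ}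
    (hab : a < b) (hb : alphaR pfun hd ξ Up Um ≤ b) (ha : a ≤ alphaL pfun hd ξ Um Up) :
    hllMid pfun hd ξ Um Up a b ∈ GstarWeak := by
  have weight_nonneg : 0 ≤ (b - a)⁻¹ := inv_nonneg.2 (sub_pos.2 hab).le
  refine ⟨?_, fun vs Bs => ?_⟩
  · rw [dens_hllMid]
    exact mul_nonneg weight_nonneg <| add_nonneg
      (mul_nonneg (sub_nonneg.2 ((dirDot_vel_le_alphaR pfun hd ξ Up Um).trans hb)) hp.1.le)
      (mul_nonneg (sub_nonneg.2 (ha.trans (alphaL_le_dirDot_vel pfun hd ξ Um Up))) hm.1.le)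
  · rw [dot8_hllMid_nstar pfun hd hm.1 hp.1 hB hab]
    refine mul_nonneg weight_nonneg ?_
    have right := relFlux_le_alphaR_mul pfun hd hξ hp Um vs Bs
    have left := alphaL_mul_le_relFlux pfun hd hξ hm Up vs Bs
    have jump := (abs_le.1 (abs_dirDot_roeV_sub_mul_relMag_sub_le hd hξ hp hm vs Bs)).1
    rw [roeV_comm Um Up, jumpSpeed_comm Um Up] at left
    linarith [mul_le_mul_of_nonneg_right hb (relEnergy_pos hp vs Bs).le,
      mul_le_mul_of_nonneg_right ha (relEnergy_pos hm vs Bs).le]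

lemma hll_update_eq (Ul U Ur : MHDState) {a b a' b' : ℝ} (hab : a < b) (hab' : a' < b') (r : ℝ) :
    U - r • (hllFlux pfun hd ξ U Ur a' b' - hllFlux pfun hd ξ Ul U a b)
      = (1 - r * (b - a')) • U + (r * -a') • hllMid pfun hd ξ U Ur a' b'
        + (r * b) • hllMid pfun hd ξ Ul U a b := by
  have hba : b - a ≠ 0 := (sub_pos.2 hab).ne'
  have hba' : b' - a' ≠ 0 := (sub_pos.2 hab').ne'
  simp only [hllFlux, hllMid]
  match_scalars <;> field

theorem hll_update_mem_Gset (hξ : unitVec ξ) {Ul U Ur : MHDState} (hUl : Ul ∈ Gset)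
    (hU : U ∈ Gset) (hUr : Ur ∈ Gset) (hBl : normalField hd ξ Ul = normalField hd ξ U)
    (hBr : normalField hd ξ U = normalField hd ξ Ur) {a b a' b' r : ℝ}
    (hab : a < b) (hab' : a' < b') (hb : 0 ≤ b) (ha' : a' ≤ 0)
    (hbl : alphaR pfun hd ξ U Ul ≤ b) (hal : a ≤ alphaL pfun hd ξ Ul U)
    (hbr : alphaR pfun hd ξ Ur U ≤ b') (har : a' ≤ alphaL pfun hd ξ U Ur)
    (hr : 0 ≤ r) (hCFL : r * (b - a') < 1) :
    U - r • (hllFlux pfun hd ξ U Ur a' b' - hllFlux pfun hd ξ Ul U a b) ∈ Gset := by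
  rw [hll_update_eq pfun hd Ul U Ur hab hab']
  exact smul_add_smul_add_smul_mem_Gset hU
    (hllMid_mem_GstarWeak pfun hd hξ hU hUr hBr hab' hbr har)
    (hllMid_mem_GstarWeak pfun hd hξ hUl hU hBl hab hbl hal) (sub_pos.2 hCFL)
    (mul_nonneg hr (neg_nonneg.2 ha')) (mul_nonneg hr hb) (by ring)

lemma normalField_dirFlux (U : MHDState) : normalField hd ξ (dirFlux pfun hd ξ U) = 0 := by
  rw [dirFlux_eq_mk]
  simp only [normalField_apply, dirDot_eq_dot3, dot3, Fin.sum_univ_three, magB, mk,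
    Matrix.cons_val, Pi.sub_apply, Pi.smul_apply, smul_eq_mul]
  ring

lemma normalField_hllFlux (Um Up : MHDState) (a b : ℝ) :
    normalField hd ξ (hllFlux pfun hd ξ Um Up a b)
      = (b - a)⁻¹ * (a * b * (normalField hd ξ Up - normalField hd ξ Um)) := by
  simp only [hllFlux, map_smul, map_add, map_sub, normalField_dirFlux, smul_eq_mul, mul_zero,
    sub_zero, zero_add]

lemma normalField_hll_update {Ul U Ur : MHDState}
    (hBl : normalField hd ξ Ul = normalField hd ξ U)
    (hBr : normalField hd ξ U = normalField hd ξ Ur) (a b a' b' r : ℝ) :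
    normalField hd ξ (U - r • (hllFlux pfun hd ξ U Ur a' b' - hllFlux pfun hd ξ Ul U a b))
      = normalField hd ξ U := by
  simp only [map_sub, map_smul, normalField_hllFlux, hBl, hBr, sub_self, mul_zero, smul_zero,
    sub_zero]

end HLL

section Scheme

lemma min_zero_lt_max_zero {a b : ℝ} (h : a < b) : min a 0 < max b 0 := by
  rcases lt_or_ge a 0 with ha | ha
  · exact min_lt_of_left_lt (lt_max_of_lt_right ha)
  · exact min_lt_of_right_lt (lt_max_of_lt_left (ha.trans_lt h))

theorem oneD_first_order_scheme_PP_general (pfun : ℝ → ℝ → ℝ) {d : ℕ} (hd : d ≤ 3)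
    {ξ : Fin d → ℝ} (hξ : unitVec ξ)
    (Δx : ℤ → ℝ) (hΔx : ∀ j, 0 < Δx j)
    (Δt : ℕ → ℝ) (hΔt : ∀ n, 0 < Δt n)
    (Ubar : ℕ → ℤ → MHDState)
    (σl σr : ℕ → ℤ → ℝ) (hσ : ∀ n j, σl n j < σr n j)
    (Bc : ℝ)
    (hinit : ∀ j, Ubar 0 j ∈ Gset ∧ normalField hd ξ (Ubar 0 j) = Bc)
    (hspeed : ∀ n j, Ubar n j ∈ Gset → Ubar n (j + 1) ∈ Gset →
      alphaR pfun hd ξ (Ubar n (j + 1)) (Ubar n j) ≤ σr n j ∧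
        σl n j ≤ alphaL pfun hd ξ (Ubar n j) (Ubar n (j + 1)))
    (hCFL : ∀ n j, (max (σr n (j - 1)) 0 - min (σl n j) 0) * Δt n / Δx j < 1)
    (hscheme : ∀ n j, Ubar (n + 1) j =
      Ubar n j - (Δt n / Δx j) •
        (hllFlux pfun hd ξ (Ubar n j) (Ubar n (j + 1))
            (min (σl n j) 0) (max (σr n j) 0)
          - hllFlux pfun hd ξ (Ubar n (j - 1)) (Ubar n j)
              (min (σl n (j - 1)) 0) (max (σr n (j - 1)) 0))) :
    ∀ n j, Ubar n j ∈ Gset ∧ normalField hd ξ (Ubar n j) = Bc := by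
  intro n
  induction n with
  | zero => exact hinit
  | succ n ih =>
    intro j
    have admissible (i : ℤ) : Ubar n i ∈ Gset := (ih i).1
    have normal_eq (i k : ℤ) : normalField hd ξ (Ubar n i) = normalField hd ξ (Ubar n k) :=
      (ih i).2.trans (ih k).2.symm
    obtain ⟨speed_r, speed_l⟩ := hspeed n j (admissible _) (admissible _)
    obtain ⟨speed_r', speed_l'⟩ := hspeed n (j - 1) (admissible _) (admissible _)
    rw [sub_add_cancel] at speed_r' speed_l'
    have cfl : Δt n / Δx j * (max (σr n (j - 1)) 0 - min (σl n j) 0) < 1 := by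
      rw [mul_comm, ← mul_div_assoc]
      exact hCFL n j
    rw [hscheme n j]
    exact ⟨hll_update_mem_Gset pfun hd hξ (admissible _) (admissible j) (admissible _)
        (normal_eq _ _) (normal_eq _ _) (min_zero_lt_max_zero (hσ n (j - 1)))
        (min_zero_lt_max_zero (hσ n j)) (le_max_right _ _) (min_le_right _ _)
        (le_max_of_le_left speed_r') (min_le_of_left_le speed_l') (le_max_of_le_left speed_r)
        (min_le_of_left_le speed_l) (div_pos (hΔt n) (hΔx j)).le cfl,
      (normalField_hll_update pfun hd (normal_eq _ _) (normal_eq _ _) _ _ _ _ _).trans (ih j).2⟩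

lemma unitVec_xi1 : unitVec xi1 := by
  simp [unitVec, xi1]

lemma normalField_xi1 (U : MHDState) : normalField d1le3 xi1 U = U 4 := by
  simp [normalField_apply, dirDot, xi1, magB]

end Scheme

/-- Theorem 3.1: positivity preservation of the 1D first-order HLL scheme. -/
theorem oneD_first_order_scheme_PP (pfun : ℝ → ℝ → ℝ) (hEOS : IsEOS pfun)
    (Δx : ℤ → ℝ) (hΔx : ∀ j, 0 < Δx j)
    (Δt : ℕ → ℝ) (hΔt : ∀ n, 0 < Δt n)
    (Ubar : ℕ → ℤ → MHDState)
    (σl σr : ℕ → ℤ → ℝ) (hσ : ∀ n j, σl n j < σr n j)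
    (Bc : ℝ)
    (hinit : ∀ j, Ubar 0 j ∈ Gset ∧ Ubar 0 j 4 = Bc)
    (hspeed : ∀ n j, Ubar n j ∈ Gset → Ubar n (j + 1) ∈ Gset →
      alphaR pfun d1le3 xi1 (Ubar n (j + 1)) (Ubar n j) ≤ σr n j ∧
        σl n j ≤ alphaL pfun d1le3 xi1 (Ubar n j) (Ubar n (j + 1)))
    (hCFL : ∀ n j, (max (σr n (j - 1)) 0 - min (σl n j) 0) * Δt n / Δx j < 1)
    (hscheme : ∀ n j, Ubar (n + 1) j =
      Ubar n j - (Δt n / Δx j) •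
        (hllFlux pfun d1le3 xi1 (Ubar n j) (Ubar n (j + 1))
            (min (σl n j) 0) (max (σr n j) 0)
          - hllFlux pfun d1le3 xi1 (Ubar n (j - 1)) (Ubar n j)
              (min (σl n (j - 1)) 0) (max (σr n (j - 1)) 0))) :
    ∀ n j, Ubar n j ∈ Gset ∧ Ubar n j 4 = Bc := by
  simpa only [normalField_xi1] using
    oneD_first_order_scheme_PP_general pfun d1le3 unitVec_xi1 Δx hΔx Δt hΔt Ubar σl σr hσ Bc
      (by simpa only [normalField_xi1] using hinit) hspeed hCFL hscheme
end MHD
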